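/- ∑_{n=0}^∞ (3/2)ₙ((2)ₙ)⁵/(((1)ₙ)³(5/4)ₙ(7/4)ₙ n!) · (1/64)ⁿ = 617416/583443 + (19 log 2)/729 + 5298·arccot(√7)/(2401√7). -/

import Mathlib

noncomputable def poch (a : ℝ) (n : ℕ) : ℝ := ∏ i ∈ Finset.range n, (a + i)

open Filter intervalIntegral

/-- The Beta value `B(k + 1, k + 1)`. -/
noncomputable def diagBeta (k : ℕ) : ℝ := ∫ x in (0 : ℝ)..1, (x * (1 - x)) ^ k

lemma diagBeta_zero : diagBeta 0 = 1 := by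
  simp [diagBeta]

lemma diagBeta_succ (k : ℕ) :
    diagBeta (k + 1) = diagBeta k * ((k + 1) / (2 * (2 * k + 3))) := by
  have hderiv : ∀ x ∈ Set.uIcc (0 : ℝ) 1,
      HasDerivAt (fun x : ℝ => (x * (1 - x)) ^ (k + 1) * (1 - 2 * x))
        ((k + 1) * (x * (1 - x)) ^ k - (2 * (2 * k + 3)) * (x * (1 - x)) ^ (k + 1)) x := by
    intro x _
    have h1 : HasDerivAt (fun x : ℝ => x * (1 - x)) (1 * (1 - x) + x * (-1)) x :=
      (hasDerivAt_id x).mul ((hasDerivAt_id x).const_sub 1)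
    have h2 : HasDerivAt (fun x : ℝ => 1 - 2 * x) (-(2 * 1)) x :=
      ((hasDerivAt_id x).const_mul 2).const_sub 1
    refine ((h1.pow (k + 1)).mul h2).congr_deriv ?_
    simp only [Nat.add_sub_cancel, Pi.pow_apply]
    push_cast
    ring
  have hint := integral_eq_sub_of_hasDerivAt hderiv
    (Continuous.intervalIntegrable (by fun_prop) _ _)
  rw [integral_sub (Continuous.intervalIntegrable (by fun_prop) _ _)
    (Continuous.intervalIntegrable (by fun_prop) _ _), integral_const_mul,
    integral_const_mul] at hint
  change (k + 1) * diagBeta k - 2 * (2 * k + 3) * diagBeta (k + 1) = _ at hint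
  simp only [sub_self, mul_zero, zero_mul, ne_eq, Nat.add_eq_zero_iff, one_ne_zero, and_false,
    not_false_eq_true, zero_pow] at hint
  have h3 : (2 * (2 * k + 3) : ℝ) ≠ 0 := by positivity
  field_simp
  linarith

lemma diagBeta_pos (k : ℕ) : 0 < diagBeta k := by
  induction k with
  | zero => simp [diagBeta_zero]
  | succ k ih => rw [diagBeta_succ]; positivity

lemma diagBeta_le_one (k : ℕ) : diagBeta k ≤ 1 := by
  induction k with
  | zero => simp [diagBeta_zero]
  | succ k ih =>
    rw [diagBeta_succ]
    refine mul_le_one₀ ih (by positivity) ?_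
    rw [div_le_one (by positivity)]
    linarith [(Nat.cast_nonneg k : (0 : ℝ) ≤ k)]

lemma summable_pow_mul_diagBeta (j : ℕ) {z : ℝ} (hz : |z| < 1) :
    Summable fun k : ℕ => (k : ℝ) ^ j * (diagBeta k * z ^ k) := by
  refine (summable_pow_mul_geometric_of_norm_lt_one (R := ℝ) j
    (r := |z|) (by simpa using hz)).of_norm_bounded fun k => ?_
  rw [norm_mul, norm_mul, norm_pow, norm_pow, Real.norm_natCast, Real.norm_eq_abs z,
    Real.norm_of_nonneg (diagBeta_pos k).le]
  exact mul_le_mul_of_nonneg_left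
    (mul_le_of_le_one_left (by positivity) (diagBeta_le_one k)) (by positivity)

lemma hasSum_diagBeta_mul_pow {z : ℝ} (hz : |z| < 1) :
    HasSum (fun k : ℕ => diagBeta k * z ^ k)
      (∫ x in (0 : ℝ)..1, (1 - z * (x * (1 - x)))⁻¹) := by
  have key : HasSum (fun k : ℕ => ∫ x in (0 : ℝ)..1, (z * (x * (1 - x))) ^ k)
      (∫ x in (0 : ℝ)..1, (1 - z * (x * (1 - x)))⁻¹) := by
    have hle : ∀ x ∈ Set.uIoc (0 : ℝ) 1, |z * (x * (1 - x))| ≤ |z| := by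
      intro x hx
      rw [Set.uIoc_of_le zero_le_one] at hx
      have h0 : 0 ≤ x * (1 - x) := mul_nonneg hx.1.le (by linarith [hx.2])
      rw [abs_mul, abs_of_nonneg h0]
      exact mul_le_of_le_one_right (abs_nonneg z) (by nlinarith [sq_nonneg x, hx.2])
    refine hasSum_integral_of_dominated_convergence (fun k _ => |z| ^ k)
      (fun k => Continuous.aestronglyMeasurable (by fun_prop)) ?_ ?_ ?_ ?_
    · refine fun k => Eventually.of_forall fun x hx => ?_
      rw [norm_pow]
      exact pow_le_pow_left₀ (norm_nonneg _) (hle x hx) k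
    · exact Eventually.of_forall fun x _ =>
        summable_geometric_of_lt_one (abs_nonneg z) hz
    · exact intervalIntegrable_const
    · refine Eventually.of_forall fun x hx => ?_
      exact hasSum_geometric_of_abs_lt_one ((hle x hx).trans_lt hz)
  convert key using 2 with k
  simp_rw [mul_pow z, integral_const_mul]
  rw [diagBeta, mul_comm]

/-- If `G k = q(k) (2k + 1) B(k + 1, k + 1) z ^ k` telescopes to `((k + 1) ^ 5 - c)` times the
summand, the weighted series reduces to the unweighted one. -/
lemma hasSum_fifth_power_mul_diagBeta {z c s q₀ q₁ q₂ q₃ q₄ : ℝ} (hz : |z| < 1)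
    (hs : HasSum (fun k : ℕ => diagBeta k * z ^ k) s)
    (hq : ∀ k : ℝ, z * (k + 1) / 2 * (q₀ + q₁ * (k + 1) + q₂ * (k + 1) ^ 2 + q₃ * (k + 1) ^ 3
        + q₄ * (k + 1) ^ 4)
      - (2 * k + 1) * (q₀ + q₁ * k + q₂ * k ^ 2 + q₃ * k ^ 3 + q₄ * k ^ 4) = (k + 1) ^ 5 - c) :
    HasSum (fun k : ℕ => ((k : ℝ) + 1) ^ 5 * (diagBeta k * z ^ k)) (c * s - q₀) := by
  set G : ℕ → ℝ := fun k => (q₀ + q₁ * k + q₂ * k ^ 2 + q₃ * k ^ 3 + q₄ * k ^ 4) * (2 * k + 1)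
    * (diagBeta k * z ^ k) with hG
  have hsum : Summable G := by
    have h := fun j => summable_pow_mul_diagBeta j hz
    refine ((((((h 0).mul_left q₀).add ((h 1).mul_left (2 * q₀ + q₁))).add
      ((h 2).mul_left (2 * q₁ + q₂))).add ((h 3).mul_left (2 * q₂ + q₃))).add
      ((h 4).mul_left (2 * q₃ + q₄))).add ((h 5).mul_left (2 * q₄)) |>.congr fun k => ?_
    simp only [hG]
    ring
  have hshift := (hasSum_nat_add_iff' 1).mpr hsum.hasSum
  have hfin := (hshift.sub hsum.hasSum).add (hs.mul_left c)
  have hval : c * s - q₀ = ∑' b, G b - ∑ i ∈ Finset.range 1, G i - ∑' b, G b + c * s := by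
    simp only [Finset.sum_range_one, hG, diagBeta_zero]
    push_cast
    ring
  rw [hval]
  refine hfin.congr_fun fun k => ?_
  have hrec : G (k + 1) = z * (k + 1) / 2 * (q₀ + q₁ * (k + 1) + q₂ * (k + 1) ^ 2
      + q₃ * (k + 1) ^ 3 + q₄ * (k + 1) ^ 4) * (diagBeta k * z ^ k) := by
    simp only [hG, diagBeta_succ]
    push_cast
    have : (2 * k + 3 : ℝ) ≠ 0 := by positivity
    field_simp
    ring
  rw [hrec]
  simp only [hG]
  linear_combination (-(diagBeta k * z ^ k)) * hq k

lemma integral_inv_one_sub_half :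
    ∫ x in (0 : ℝ)..1, (1 - (1 / 2 : ℝ) * (x * (1 - x)))⁻¹
      = 8 / √7 * Real.arctan (1 / √7) := by
  have h7 : √7 ^ 2 = (7 : ℝ) := Real.sq_sqrt (by norm_num)
  have h7' : √7 ≠ (0 : ℝ) := by positivity
  have hne : ∀ x : ℝ, 1 - (1 / 2 : ℝ) * (x * (1 - x)) ≠ 0 := fun x => by
    nlinarith [sq_nonneg (x - 1 / 2)]
  rw [integral_eq_sub_of_hasDerivAt (f := fun x => 4 / √7 * Real.arctan ((2 * x - 1) / √7))]
  · have : (2 * 0 - 1) / √7 = -(1 / √7) := by ring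
    rw [this, Real.arctan_neg]
    norm_num
    ring
  · intro x _
    have h1 : HasDerivAt (fun x : ℝ => (2 * x - 1) / √7) (2 * 1 / √7) x :=
      (((hasDerivAt_id x).const_mul 2).sub_const 1).div_const _
    refine (h1.arctan.const_mul (4 / √7)).congr_deriv ?_
    have hx : 1 + ((2 * x - 1) / √7) ^ 2 = 8 / 7 * (1 - 1 / 2 * (x * (1 - x))) := by
      rw [div_pow, h7]; ring
    rw [hx]
    rw [show 4 / √7 * (1 / (8 / 7 * (1 - 1 / 2 * (x * (1 - x)))) * (2 * 1 / √7))
      = 7 / √7 ^ 2 * (1 - 1 / 2 * (x * (1 - x)))⁻¹ by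
        rw [one_div, mul_inv]; ring, h7]
    ring
  · exact (Continuous.inv₀ (by fun_prop) hne).intervalIntegrable _ _

lemma integral_inv_one_add_half :
    ∫ x in (0 : ℝ)..1, (1 - (-1 / 2 : ℝ) * (x * (1 - x)))⁻¹ = 4 / 3 * Real.log 2 := by
  have hpos : ∀ x ∈ Set.uIcc (0 : ℝ) 1, 0 < 1 + x ∧ 0 < 2 - x := fun x hx => by
    rw [Set.uIcc_of_le zero_le_one] at hx
    exact ⟨by linarith [hx.1], by linarith [hx.2]⟩
  have hfac : ∀ x : ℝ, 1 - (-1 / 2 : ℝ) * (x * (1 - x)) = (1 + x) * (2 - x) / 2 :=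
    fun x => by ring
  simp_rw [hfac]
  rw [integral_eq_sub_of_hasDerivAt
    (f := fun x => 2 / 3 * (Real.log (1 + x) - Real.log (2 - x)))]
  · norm_num
    ring
  · intro x hx
    obtain ⟨h1, h2⟩ := hpos x hx
    refine (((((hasDerivAt_id x).const_add 1).log h1.ne').sub
      (((hasDerivAt_id x).const_sub 2).log h2.ne')).const_mul (2 / 3 : ℝ)).congr_deriv ?_
    have := h1.ne'
    have := h2.ne'
    simp only [id]
    field_simp
    ring
  · refine ContinuousOn.intervalIntegrable (ContinuousOn.inv₀ (by fun_prop) fun x hx => ?_)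
    obtain ⟨h1, h2⟩ := hpos x hx
    positivity

lemma poch_succ (a : ℝ) (n : ℕ) : poch a (n + 1) = poch a n * (a + n) :=
  Finset.prod_range_succ _ _

lemma poch_pos {a : ℝ} (ha : 0 < a) (n : ℕ) : 0 < poch a n :=
  Finset.prod_pos fun _ _ => by positivity

lemma poch_one (n : ℕ) : poch 1 n = n.factorial := by
  induction n with
  | zero => simp [poch]
  | succ n ih => rw [poch_succ, ih, Nat.factorial_succ]; push_cast; ring

lemma poch_two (n : ℕ) : poch 2 n = (n + 1) * n.factorial := by
  induction n with
  | zero => simp [poch]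
  | succ n ih => rw [poch_succ, ih, Nat.factorial_succ]; push_cast; ring

lemma poch_mul_factorial_eq_diagBeta (n : ℕ) :
    poch (3 / 2) n * n.factorial
      = 6 * 16 ^ n * diagBeta (2 * n + 1) * (poch (5 / 4) n * poch (7 / 4) n) := by
  induction n with
  | zero => norm_num [poch, diagBeta_succ, diagBeta_zero]
  | succ n ih =>
    have hb : diagBeta (2 * (n + 1) + 1)
        = diagBeta (2 * n + 1) * ((n + 1) * (2 * n + 3) / (2 * (4 * n + 5) * (4 * n + 7))) := by
      rw [show 2 * (n + 1) + 1 = 2 * n + 1 + 1 + 1 by ring, diagBeta_succ, diagBeta_succ]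
      push_cast
      have h5 : (4 * n + 5 : ℝ) ≠ 0 := by positivity
      have h7 : (4 * n + 7 : ℝ) ≠ 0 := by positivity
      have h5' : (2 * (2 * n + 1) + 3 : ℝ) ≠ 0 := by positivity
      have h7' : (2 * (2 * n + 1 + 1) + 3 : ℝ) ≠ 0 := by positivity
      field_simp
      ring
    rw [poch_succ, poch_succ, poch_succ, hb, Nat.factorial_succ]
    push_cast
    have h5 : (4 * n + 5 : ℝ) ≠ 0 := by positivity
    have h7 : (4 * n + 7 : ℝ) ≠ 0 := by positivity
    calc poch (3 / 2) n * (3 / 2 + n) * ((n + 1) * n.factorial)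
        = (poch (3 / 2) n * n.factorial) * ((3 / 2 + n) * (n + 1)) := by ring
      _ = _ := by
        rw [ih]
        field_simp
        ring

theorem sixF5_sixtyfourth_value :
    ∑' n : ℕ,
        poch (3/2) n * (poch 2 n)^5
          / ((poch 1 n)^3 * poch (5/4) n * poch (7/4) n * (Nat.factorial n))
          * (1/64 : ℝ) ^ n =
      617416 / 583443 + 19 * Real.log 2 / 729
        + 5298 * Real.arctan (1 / Real.sqrt 7) / (2401 * Real.sqrt 7) := by
  have hz₁ : |(1 / 2 : ℝ)| < 1 := by norm_num [abs_lt]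
  have hz₂ : |(-1 / 2 : ℝ)| < 1 := by norm_num [abs_lt]
  have hP := hasSum_fifth_power_mul_diagBeta (c := 3532 / 2401) (q₀ := -13024 / 2401)
    (q₁ := -2784 / 343) (q₂ := -320 / 49) (q₃ := -144 / 49) (q₄ := -4 / 7) hz₁
    (hasSum_diagBeta_mul_pow hz₁) (fun k => by ring)
  have hM := hasSum_fifth_power_mul_diagBeta (c := -76 / 729) (q₀ := 160 / 729)
    (q₁ := -224 / 243) (q₂ := -64 / 27) (q₃ := -16 / 9) (q₄ := -4 / 9) hz₂
    (hasSum_diagBeta_mul_pow hz₂) (fun k => by ring)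
  rw [integral_inv_one_sub_half] at hP
  rw [integral_inv_one_add_half] at hM
  have hinj : Function.Injective fun n : ℕ => 2 * n + 1 := fun a b h => by
    simp only at h
    omega
  have hodd := (hinj.hasSum_iff fun k hk => ?_).mpr ((hP.sub hM).mul_left (3 / 16))
  · refine (HasSum.tsum_eq (hodd.congr_fun fun n => ?_)).trans ?_
    · have hf : (n.factorial : ℝ) ≠ 0 := by positivity
      have h5 := (poch_pos (show (0 : ℝ) < 5 / 4 by norm_num) n).ne'
      have h7 := (poch_pos (show (0 : ℝ) < 7 / 4 by norm_num) n).ne'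
      have hneg : (-1 / 2 : ℝ) ^ (2 * n + 1) = -(1 / 2) ^ (2 * n + 1) := by
        rw [show (-1 / 2 : ℝ) = -(1 / 2) by ring, Odd.neg_pow ⟨n, rfl⟩]
      have h64 : (64 : ℝ) ^ n = 16 ^ n * 4 ^ n := by rw [← mul_pow]; norm_num
      have hhalf : (1 / 2 : ℝ) ^ (2 * n + 1) = 1 / 2 / 4 ^ n := by
        rw [pow_succ, pow_mul, div_pow, div_pow]; norm_num; ring
      calc _ = (n + 1 : ℝ) ^ 5 * (poch (3 / 2) n * n.factorial)
            / (poch (5 / 4) n * poch (7 / 4) n) / 64 ^ n := by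
            rw [poch_one, poch_two, one_div, inv_pow]
            field_simp
        _ = _ := by
            rw [poch_mul_factorial_eq_diagBeta, h64]
            simp only [Function.comp_apply, hneg, hhalf]
            push_cast
            field_simp
            ring
    · have h7' : √7 ≠ (0 : ℝ) := by positivity
      field_simp
      ring
  · have hev : Even k := by
      by_contra h
      obtain ⟨n, rfl⟩ := Nat.not_even_iff_odd.mp h
      exact hk ⟨n, rfl⟩
    rw [show (-1 / 2 : ℝ) = -(1 / 2) by ring, hev.neg_pow]
    ring
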